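/- For every positive integer k, there exists an (11^k, 165^k) strategy for the GKS game; equivalently, C(165^k) ≤ 11^k for all k ≥ 1. -/

import Mathlib

/-- The string produced in the GKS game on `n` variables when Eve reveals the
indices in the order `π 0, π 1, …, π (n-1)`, Alice plays according to
strategy `a` (which, given the nonempty list of indices revealed so far,
outputs the bit placed at the most recently revealed index) at the first
`n - 1` revealed indices, and Eve places the bit `b` at the last revealed
index `π (n-1)`. -/
def gksString (n : ℕ) (a : List (Fin n) → Bool) (π : Equiv.Perm (Fin n))
    (b : Bool) : Fin n → Bool :=
  fun j =>
    if ((π.symm j : Fin n) : ℕ) = n - 1 then b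
    else a (((List.finRange n).take (((π.symm j : Fin n) : ℕ) + 1)).map (⇑π))

/-- `(a, B)` is a `(k, n)` strategy for the GKS game: for every order `π` in
which Eve reveals the indices and every bit `b` placed by Eve at the last
revealed index `π (n-1)`, the resulting string `x` satisfies
`π (n-1) ∈ B x` and `(B x).card ≤ k`. -/
def IsGKSStrategy (k n : ℕ) (a : List (Fin n) → Bool)
    (B : (Fin n → Bool) → Finset (Fin n)) : Prop :=
  ∀ (π : Equiv.Perm (Fin n)) (b : Bool),
    (∀ i : Fin n, (i : ℕ) = n - 1 → π i ∈ B (gksString n a π b)) ∧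
    (B (gksString n a π b)).card ≤ k

/-- There exists a `(k, n)` strategy for the GKS game. -/
def HasGKSStrategy (k n : ℕ) : Prop :=
  ∃ (a : List (Fin n) → Bool) (B : (Fin n → Bool) → Finset (Fin n)),
    IsGKSStrategy k n a B

/-- The cost `C(n)` of the GKS game on `n` variables: the least `k` for which
a `(k, n)` strategy exists. -/
noncomputable def gksCost (n : ℕ) : ℕ :=
  sInf {k : ℕ | HasGKSStrategy k n}

/-!
Strategies compose: on `m` blocks of `n` indices, Alice plays her strategy on `n` inside every block
but chooses the last bit of the block so that a function `f` of the block, whose value that bit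
decides, equals the bit which her strategy on `m` prescribes for the block. With `f` the parity this
gives `C(m * n) ≤ C(m) * C(n)`, so it suffices to find an `(11, 165)` strategy.

For this, match every 4-element set of positions in a block of `15` with a codeword of the Hamming
code that vanishes on the set. In each of `11` blocks Alice writes `0` at the first four revealed
positions and then the codeword matched with these four, with `f` the indicator of the words that
are not matched codewords, and she aims at `f = 1` in every block. A block with `f = 1` differs from
its codeword exactly at the position revealed last. So if `f = 1` throughout, each block contributes
one candidate for Eve's last index; otherwise only the last block to be completed has `f = 0`, and
the candidates are the `15 - 4 = 11` positions of this block outside the four matched with its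
codeword.
-/

open Finset Function

namespace GKS

section Play

variable {ι ι' : Type*}

/-- A history in which every index is revealed exactly once. -/
def IsEnumeration (l : List ι) : Prop :=
  l.Nodup ∧ ∀ i, i ∈ l

theorem IsEnumeration.mem_of_ne {i t : ι} {h : List ι} (hth : IsEnumeration (t :: h))
    (hi : i ≠ t) : i ∈ h :=
  (List.mem_cons.1 (hth.2 i)).resolve_left hi

theorem IsEnumeration.map_equiv {l : List ι} (hl : IsEnumeration l) (e : ι ≃ ι') :
    IsEnumeration (l.map e) :=
  ⟨hl.1.map e.injective, fun i => List.mem_map.2 ⟨e.symm i, hl.2 _, e.apply_symm_apply i⟩⟩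

theorem IsEnumeration.length_eq [Fintype ι] {l : List ι} (hl : IsEnumeration l) :
    l.length = Fintype.card ι := by
  classical
  rw [← List.toFinset_card_of_nodup hl.1, ← card_univ]
  congr
  simpa [Finset.eq_univ_iff_forall] using hl.2

variable [DecidableEq ι] [DecidableEq ι']

/-- The string written by Alice's strategy `a` in the course of a history. Histories list the
revealed indices with the most recent one first, and unrevealed positions hold `false`. -/
def written (a : List ι → Bool) : List ι → ι → Bool
  | [] => fun _ => false
  | i :: h => update (written a h) i (a (i :: h))

/-- The string `x` is a possible outcome of the game against Alice's strategy `a` on the index type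
`ι`, where `t` is the index revealed last. -/
def IsPlay (a : List ι → Bool) (x : ι → Bool) (t : ι) : Prop :=
  ∃ h b, IsEnumeration (t :: h) ∧ x = update (written a h) t b

/-- There is a `(k, n)` strategy for the game on an arbitrary index type `ι` of `n` elements. -/
def HasStrategyOn (k : ℕ) (ι : Type*) [DecidableEq ι] : Prop :=
  ∃ (a : List ι → Bool) (B : (ι → Bool) → Finset ι), ∀ x t, IsPlay a x t → t ∈ B x ∧ #(B x) ≤ k

theorem written_of_suffix (a : List ι → Bool) {i : ι} {p h : List ι} (hp : i :: p <:+ h)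
    (hh : h.Nodup) : written a h i = a (i :: p) := by
  induction h with
  | nil => simp at hp
  | cons j h ih =>
    obtain ⟨hj, hh⟩ := List.nodup_cons.1 hh
    rcases List.suffix_cons_iff.1 hp with hp | hp
    · obtain ⟨rfl, rfl⟩ := List.cons.inj hp
      simp [written]
    · have hij : i ≠ j := fun hij => hj (hij ▸ hp.subset List.mem_cons_self)
      rw [written, update_of_ne hij, ih hp hh]

theorem written_map_equiv (e : ι ≃ ι') (a : List ι' → Bool) (h : List ι) :
    written a (h.map e) ∘ e = written (fun l => a (l.map e)) h := by
  induction h with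
  | nil => rfl
  | cons i h ih => rw [List.map_cons, written, update_comp_equiv, ih, e.symm_apply_apply]; rfl

theorem HasStrategyOn.of_equiv {k : ℕ} (e : ι ≃ ι') (hk : HasStrategyOn k ι') :
    HasStrategyOn k ι := by
  obtain ⟨a, B, hB⟩ := hk
  refine ⟨fun l => a (l.map e), fun x => (B (x ∘ e.symm)).map e.symm.toEmbedding, ?_⟩
  rintro x t ⟨h, b, hth, rfl⟩
  have hplay : IsPlay a (update (written (fun l => a (l.map e)) h) t b ∘ e.symm) (e t) := by
    refine ⟨h.map e, b, hth.map_equiv e, ?_⟩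
    rw [update_comp_equiv, ← written_map_equiv, comp_assoc, e.self_comp_symm, comp_id, e.symm_symm]
  obtain ⟨hmem, hcard⟩ := hB _ _ hplay
  exact ⟨mem_map.2 ⟨e t, hmem, by simp⟩, by simpa using hcard⟩

/-- The history after the first `m` indices have been revealed in the order `π`. -/
def revealed {n : ℕ} (π : Equiv.Perm (Fin n)) (m : ℕ) : List (Fin n) :=
  (((List.finRange n).take m).map π).reverse

theorem revealed_succ {n : ℕ} (π : Equiv.Perm (Fin n)) (i : Fin n) :
    revealed π (i + 1) = π i :: revealed π i := by
  simp [revealed, List.take_add_one]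

theorem revealed_suffix {n : ℕ} (π : Equiv.Perm (Fin n)) {l m : ℕ} (hlm : l ≤ m) :
    revealed π l <:+ revealed π m :=
  List.reverse_suffix.2 ((List.take_prefix_take_left hlm).map π)

theorem isEnumeration_revealed {n : ℕ} (π : Equiv.Perm (Fin n)) :
    IsEnumeration (revealed π n) := by
  rw [revealed, List.take_of_length_le (List.length_finRange).le]
  exact ⟨List.nodup_reverse.2 ((List.nodup_finRange n).map π.injective),
    fun i => List.mem_reverse.2 (List.mem_map.2 ⟨π.symm i, List.mem_finRange _, by simp⟩)⟩

theorem gksString_eq_update {n : ℕ} (a : List (Fin (n + 1)) → Bool)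
    (π : Equiv.Perm (Fin (n + 1))) (b : Bool) :
    gksString (n + 1) (fun l => a l.reverse) π b =
      update (written a (revealed π n)) (π (Fin.last n)) b := by
  have hnodup : (revealed π n).Nodup :=
    (isEnumeration_revealed π).1.sublist (revealed_suffix π n.le_succ).sublist
  funext j
  obtain ⟨i, rfl⟩ := π.surjective j
  rw [gksString, π.symm_apply_apply, Nat.add_sub_cancel]
  split_ifs with hi
  · rw [show i = Fin.last n from Fin.ext hi, update_self]
  · have hin : (i : ℕ) < n := lt_of_le_of_ne (Nat.le_of_lt_succ i.2) hi
    have hsuffix : π i :: revealed π i <:+ revealed π n :=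
      revealed_succ π i ▸ revealed_suffix π hin
    rw [update_of_ne (π.injective.ne fun hlast => hi (congrArg Fin.val hlast)),
      written_of_suffix a hsuffix hnodup, ← revealed_succ]
    rfl

theorem HasStrategyOn.hasGKSStrategy {k n : ℕ} (hk : HasStrategyOn k (Fin n)) :
    HasGKSStrategy k n := by
  obtain ⟨a, B, hB⟩ := hk
  refine ⟨fun l => a l.reverse, B, fun π b => ?_⟩
  cases n with
  | zero => exact ⟨fun i => i.elim0, by simp [Finset.eq_empty_of_isEmpty]⟩
  | succ n =>
    have hth : IsEnumeration (π (Fin.last n) :: revealed π n) :=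
      revealed_succ π (Fin.last n) ▸ isEnumeration_revealed π
    obtain ⟨hmem, hcard⟩ := hB _ _ ⟨_, b, hth, gksString_eq_update a π b⟩
    refine ⟨fun i hi => ?_, hcard⟩
    rwa [show i = Fin.last n from Fin.ext hi]

end Play

section EndSensitive

variable {κ : Type*} [DecidableEq κ]

/-- A Boolean function `f` of the final string whose value is still undecided when Alice's strategy
`a` has been played up to the last index, so that the last bit determines it. -/
def EndSensitive (a : List κ → Bool) (f : (κ → Bool) → Bool) : Prop :=
  ∀ x t, IsPlay a x t → f (update x t true) ≠ f (update x t false)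

theorem EndSensitive.apply_update_beq {a : List κ → Bool} {f : (κ → Bool) → Bool}
    (hf : EndSensitive a f) {i : κ} {h : List κ} (hi : IsEnumeration (i :: h)) (c : Bool) :
    f (update (written a h) i (f (update (written a h) i true) == c)) = c := by
  have hne := hf _ i ⟨h, true, hi, rfl⟩
  rw [update_idem, update_idem] at hne
  cases htrue : f (update (written a h) i true) <;> cases c <;> simp_all

theorem endSensitive_parity [Fintype κ] (a : List κ → Bool) :
    EndSensitive a fun x => (#{i | x i = true}).bodd := by
  intro x t _
  have htrue : ({i | update x t true i = true} : Finset κ) =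
      insert t ({i | update x t false i = true} : Finset κ) := by
    ext i
    by_cases hi : i = t <;> simp [update_apply, hi]
  beta_reduce
  rw [htrue, card_insert_of_notMem (by simp), Nat.bodd_succ]
  exact Bool.not_ne_self _

end EndSensitive

section Compose

variable {ι κ : Type*} [DecidableEq ι]

/-- The history of the block `{j} × κ` within a history of `ι × κ`. -/
def block (j : ι) (h : List (ι × κ)) : List κ :=
  h.filterMap fun p => if p.1 = j then some p.2 else none

@[simp]
theorem block_cons_self (j : ι) (i : κ) (h : List (ι × κ)) :
    block j ((j, i) :: h) = i :: block j h := by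
  simp [block]

theorem block_cons_of_ne {j j' : ι} (hj : j' ≠ j) (i : κ) (h : List (ι × κ)) :
    block j ((j', i) :: h) = block j h := by
  simp [block, hj]

@[simp]
theorem mem_block {j : ι} {i : κ} {h : List (ι × κ)} : i ∈ block j h ↔ (j, i) ∈ h := by
  simp [block]

theorem nodup_block (j : ι) {h : List (ι × κ)} (hh : h.Nodup) : (block j h).Nodup := by
  refine hh.filterMap ?_
  simp +contextual [Prod.ext_iff]

theorem isEnumeration_block {j : ι} {h : List (ι × κ)} (hh : h.Nodup) (hj : ∀ i, (j, i) ∈ h) :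
    IsEnumeration (block j h) :=
  ⟨nodup_block j hh, fun i => mem_block.2 (hj i)⟩

variable [DecidableEq κ]

theorem curry_update_self (x : ι × κ → Bool) (j : ι) (i : κ) (b : Bool) :
    curry (update x (j, i) b) j = update (curry x j) i b := by
  funext k
  simp [curry, update_apply]

theorem curry_update_of_ne {j j' : ι} (hj : j' ≠ j) (x : ι × κ → Bool) (i : κ) (b : Bool) :
    curry (update x (j', i) b) j = curry x j := by
  funext k
  simp [curry, hj.symm]

variable [Fintype κ]

/-- The blocks all of whose indices have been revealed, the one completed last coming first. -/
def completed : List (ι × κ) → List ι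
  | [] => []
  | (j, i) :: h => if ∀ i', (j, i') ∈ (j, i) :: h then j :: completed h else completed h

/-- Alice's strategy on `ι × κ` which plays `a₂` inside each block, except that the last bit of a
block is chosen such that the value of `f` on the block is the bit that `a₁` writes when the blocks
are considered as revealed upon completion. -/
def compose (a₁ : List ι → Bool) (a₂ : List κ → Bool) (f : (κ → Bool) → Bool) :
    List (ι × κ) → Bool
  | [] => false
  | (j, i) :: h =>
    if ∀ i', (j, i') ∈ (j, i) :: h then
      f (update (written a₂ (block j h)) i true) == a₁ (completed ((j, i) :: h))
    else a₂ (block j ((j, i) :: h))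

theorem mem_completed [Nonempty κ] {j : ι} {h : List (ι × κ)} :
    j ∈ completed h ↔ ∀ i, (j, i) ∈ h := by
  induction h with
  | nil => simp [completed]
  | cons p h ih =>
    obtain ⟨j', i⟩ := p
    rw [completed]
    split_ifs with hfull
    · rcases eq_or_ne j j' with rfl | hj
      · simpa using hfull
      · simp [hj, ih]
    · rcases eq_or_ne j j' with rfl | hj
      · refine iff_of_false (fun hmem => hfull fun i' => ?_) hfull
        exact List.mem_cons_of_mem _ (ih.1 hmem i')
      · simp [hj, ih]

theorem nodup_completed {h : List (ι × κ)} (hh : h.Nodup) : (completed h).Nodup := by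
  induction h with
  | nil => simp [completed]
  | cons p h ih =>
    obtain ⟨j, i⟩ := p
    obtain ⟨hp, hh⟩ := List.nodup_cons.1 hh
    have : Nonempty κ := ⟨i⟩
    rw [completed]
    split_ifs
    · exact List.nodup_cons.2 ⟨fun hj => hp (mem_completed.1 hj i), ih hh⟩
    · exact ih hh

variable (a₁ : List ι → Bool) (a₂ : List κ → Bool) (f : (κ → Bool) → Bool)

theorem curry_written_compose_of_not_full {j : ι} {h : List (ι × κ)} (hj : ¬ ∀ i, (j, i) ∈ h) :
    curry (written (compose a₁ a₂ f) h) j = written a₂ (block j h) := by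
  induction h with
  | nil => rfl
  | cons p h ih =>
    obtain ⟨j', i⟩ := p
    have ih := ih fun hfull => hj fun i' => List.mem_cons_of_mem _ (hfull i')
    rcases eq_or_ne j' j with rfl | hne
    · rw [written, curry_update_self, ih, compose, if_neg hj, block_cons_self, written]
    · rw [written, curry_update_of_ne hne, ih, block_cons_of_ne hne]

theorem curry_written_compose_cons_of_full {j : ι} {i : κ} {h : List (ι × κ)}
    (hh : ((j, i) :: h).Nodup) (hj : ∀ i', (j, i') ∈ (j, i) :: h) :
    curry (written (compose a₁ a₂ f) ((j, i) :: h)) j =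
      update (written a₂ (block j h)) i
        (f (update (written a₂ (block j h)) i true) == a₁ (completed ((j, i) :: h))) := by
  have hnot : ¬ ∀ i', (j, i') ∈ h := fun hfull => (List.nodup_cons.1 hh).1 (hfull i)
  rw [written, curry_update_self, curry_written_compose_of_not_full a₁ a₂ f hnot, compose,
    if_pos hj]

theorem exists_isPlay_curry_written [Nonempty κ] {j : ι} {h : List (ι × κ)} (hh : h.Nodup)
    (hj : ∀ i, (j, i) ∈ h) : ∃ i, IsPlay a₂ (curry (written (compose a₁ a₂ f) h) j) i := by
  induction h with
  | nil => simp at hj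
  | cons p h ih =>
    obtain ⟨j', i⟩ := p
    rcases eq_or_ne j' j with rfl | hne
    · refine ⟨i, block j' h, _, ?_, curry_written_compose_cons_of_full a₁ a₂ f hh hj⟩
      simpa using isEnumeration_block hh hj
    · rw [written, curry_update_of_ne hne]
      exact ih (List.nodup_cons.1 hh).2 (by simpa [hne.symm] using hj)

variable {a₂ f}

theorem EndSensitive.apply_curry_written [Nonempty κ] (hf : EndSensitive a₂ f) {j : ι}
    {h : List (ι × κ)} (hh : h.Nodup) (hj : ∀ i, (j, i) ∈ h) :
    f (curry (written (compose a₁ a₂ f) h) j) = written a₁ (completed h) j := by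
  induction h with
  | nil => simp at hj
  | cons p h ih =>
    obtain ⟨j', i⟩ := p
    rcases eq_or_ne j' j with rfl | hne
    · have henum : IsEnumeration (i :: block j' h) := by simpa using isEnumeration_block hh hj
      rw [curry_written_compose_cons_of_full a₁ a₂ f hh hj, hf.apply_update_beq henum, completed,
        if_pos hj, written, update_self]
    · rw [written, curry_update_of_ne hne,
        ih (List.nodup_cons.1 hh).2 (by simpa [hne.symm] using hj), completed]
      split_ifs
      · rw [written, update_of_ne hne.symm]
      · rfl

variable {a₁} {x : ι × κ → Bool} {t : ι × κ}

theorem isPlay_curry_of_compose (hx : IsPlay (compose a₁ a₂ f) x t) :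
    IsPlay a₂ (curry x t.1) t.2 := by
  obtain ⟨j, i⟩ := t
  obtain ⟨h, b, ⟨hnodup, hmem⟩, rfl⟩ := hx
  have hnot : ¬ ∀ i', (j, i') ∈ h := fun hfull => (List.nodup_cons.1 hnodup).1 (hfull i)
  refine ⟨block j h, b, ?_, ?_⟩
  · simpa using isEnumeration_block hnodup fun i' => hmem (j, i')
  · rw [curry_update_self, curry_written_compose_of_not_full a₁ a₂ f hnot]

theorem exists_isPlay_curry_of_compose (hx : IsPlay (compose a₁ a₂ f) x t) (j : ι) :
    ∃ i, IsPlay a₂ (curry x j) i := by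
  rcases eq_or_ne j t.1 with rfl | hj
  · exact ⟨t.2, isPlay_curry_of_compose hx⟩
  · obtain ⟨h, b, hth, rfl⟩ := hx
    have : Nonempty κ := ⟨t.2⟩
    rw [curry_update_of_ne hj.symm]
    exact exists_isPlay_curry_written a₁ a₂ f (List.nodup_cons.1 hth.1).2
      fun i => hth.mem_of_ne (ne_of_apply_ne Prod.fst hj)

theorem EndSensitive.isPlay_of_compose (hf : EndSensitive a₂ f)
    (hx : IsPlay (compose a₁ a₂ f) x t) : IsPlay a₁ (fun j => f (curry x j)) t.1 := by
  obtain ⟨h, b, hth, rfl⟩ := hx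
  obtain ⟨ht, hh⟩ := List.nodup_cons.1 hth.1
  have : Nonempty κ := ⟨t.2⟩
  have hfull : ∀ j ≠ t.1, ∀ i, (j, i) ∈ h :=
    fun j hj i => hth.mem_of_ne (ne_of_apply_ne Prod.fst hj)
  refine ⟨completed h, f (curry (update (written (compose a₁ a₂ f) h) t b) t.1), ⟨?_, ?_⟩, ?_⟩
  · exact List.nodup_cons.2 ⟨fun hmem => ht (mem_completed.1 hmem t.2), nodup_completed hh⟩
  · intro j
    rw [List.mem_cons, mem_completed]
    exact or_iff_not_imp_left.2 (hfull j)
  · refine (update_eq_iff.2 ⟨rfl, fun j hj => ?_⟩).symm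
    rw [curry_update_of_ne hj.symm, hf.apply_curry_written a₁ hh (hfull j hj)]

end Compose

section Product

variable {ι κ : Type*} [DecidableEq ι] [DecidableEq κ] [Finite κ]

theorem HasStrategyOn.of_compose {k : ℕ} {a₁ : List ι → Bool} {a₂ : List κ → Bool}
    {f : (κ → Bool) → Bool} (w : Bool → ℕ) {B₁ : (ι → Bool) → Finset ι}
    (h₁ : ∀ y t, IsPlay a₁ y t → t ∈ B₁ y ∧ ∑ j ∈ B₁ y, w (y j) ≤ k)
    {B₂ : (κ → Bool) → Finset κ} (h₂ : ∀ x t, IsPlay a₂ x t → t ∈ B₂ x ∧ #(B₂ x) ≤ w (f x))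
    (hf : EndSensitive a₂ f) : HasStrategyOn k (ι × κ) := by
  cases nonempty_fintype κ
  refine ⟨compose a₁ a₂ f, fun x =>
    (B₁ fun j => f (curry x j)).biUnion fun j => (B₂ (curry x j)).image (Prod.mk j), ?_⟩
  intro x t hx
  obtain ⟨hmem, hsum⟩ := h₁ _ _ (hf.isPlay_of_compose hx)
  refine ⟨mem_biUnion.2 ⟨t.1, hmem, mem_image_of_mem _ (h₂ _ _ (isPlay_curry_of_compose hx)).1⟩,
    card_biUnion_le.trans ((sum_le_sum fun j _ => ?_).trans hsum)⟩
  obtain ⟨i, hi⟩ := exists_isPlay_curry_of_compose hx j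
  exact card_image_le.trans (h₂ _ _ hi).2

theorem HasStrategyOn.mul {k₁ k₂ : ℕ} (h₁ : HasStrategyOn k₁ ι) (h₂ : HasStrategyOn k₂ κ) :
    HasStrategyOn (k₁ * k₂) (ι × κ) := by
  cases nonempty_fintype κ
  obtain ⟨a₁, B₁, h₁⟩ := h₁
  obtain ⟨a₂, B₂, h₂⟩ := h₂
  refine .of_compose (fun _ => k₂) (fun y t hy => ⟨(h₁ y t hy).1, ?_⟩) h₂ (endSensitive_parity a₂)
  rw [sum_const, smul_eq_mul]
  exact Nat.mul_le_mul_right k₂ (h₁ y t hy).2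

end Product

theorem HasStrategyOn.pow {κ : Type*} [DecidableEq κ] [Finite κ] {k : ℕ}
    (hk : HasStrategyOn k κ) (m : ℕ) : HasStrategyOn (k ^ m) (Fin m → κ) := by
  induction m with
  | zero => exact ⟨fun _ => true, fun _ => univ, fun _ t _ => ⟨mem_univ t, by simp⟩⟩
  | succ m ih =>
    rw [pow_succ']
    exact (hk.mul ih).of_equiv (Fin.consEquiv fun _ => κ).symm

section VanishingCode

variable {ι κ : Type*} [DecidableEq ι] [DecidableEq κ]

/-- The words `g S`, where `S` runs through the `s`-element sets, form a code correcting one error,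
i.e. altering one bit in each of two different words never makes them equal, and the word `g S`
vanishes on `S`. -/
structure IsVanishingCode (s : ℕ) (g : Finset κ → κ → Bool) : Prop where
  eq_false : ∀ S, #S = s → ∀ i ∈ S, g S i = false
  eq_of_update_eq : ∀ S S', #S = s → #S' = s → ∀ i i' b b',
    update (g S) i b = update (g S') i' b' → S = S'

/-- Alice's strategy which writes `g S`, where `S` is the set of the first `s` revealed indices. -/
def writeCodeword (s : ℕ) (g : Finset κ → κ → Bool) : List κ → Bool
  | [] => false
  | i :: h => if h.length < s then false else g (h.rtake s).toFinset i

/-- The string `x` is one of the words `g S`. -/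
def IsCodeword (s : ℕ) (g : Finset κ → κ → Bool) (x : κ → Bool) : Prop :=
  ∃ S, #S = s ∧ x = g S

open Classical in
/-- The indices at which the play against `writeCodeword s g` resulting in `x` may have ended. -/
noncomputable def endCandidates [Fintype κ] (s : ℕ) (g : Finset κ → κ → Bool) (x : κ → Bool) :
    Finset κ :=
  {i | ∃ S b, #S = s ∧ i ∉ S ∧ x = update (g S) i b}

variable {s : ℕ} {g : Finset κ → κ → Bool}

theorem written_writeCodeword_of_length_le {h : List κ} (hs : h.length ≤ s) :
    written (writeCodeword s g) h = fun _ => false := by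
  induction h with
  | nil => rfl
  | cons i h ih =>
    rw [List.length_cons] at hs
    rw [written, ih (by lia), writeCodeword, if_pos (by lia)]
    exact update_eq_self i _

theorem rtake_cons_of_le_length {α : Type*} {i : α} {h : List α} (hs : s ≤ h.length) :
    (i :: h).rtake s = h.rtake s := by
  rw [List.rtake, List.rtake, List.length_cons, Nat.succ_sub hs, List.drop_succ_cons]

theorem written_writeCodeword {h : List κ} (hs : s ≤ h.length)
    (hg : ∀ i ∈ h.rtake s, g (h.rtake s).toFinset i = false) {k : κ} (hk : k ∈ h) :
    written (writeCodeword s g) h k = g (h.rtake s).toFinset k := by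
  induction h with
  | nil => simp at hk
  | cons i h ih =>
    rcases hs.eq_or_lt with hs | hs
    · rw [written_writeCodeword_of_length_le hs.ge, hg k (by simpa [List.rtake, hs] using hk)]
    · have hs : s ≤ h.length := Nat.le_of_lt_succ hs
      rw [rtake_cons_of_le_length hs] at hg ⊢
      rw [written, writeCodeword, if_neg hs.not_gt]
      rcases eq_or_ne k i with rfl | hki
      · rw [update_self]
      · rw [update_of_ne hki, ih hs hg ((List.mem_cons.1 hk).resolve_left hki)]

namespace IsVanishingCode

theorem isCodeword_update_iff (hg : IsVanishingCode s g) {S : Finset κ} (hS : #S = s) (t : κ)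
    (b : Bool) : IsCodeword s g (update (g S) t b) ↔ b = g S t := by
  constructor
  · rintro ⟨S', hS', hx⟩
    obtain rfl : S = S' :=
      hg.eq_of_update_eq S S' hS hS' t t b (g S' t) (by rw [hx, update_eq_self])
    rw [← hx, update_self]
  · rintro rfl
    exact ⟨S, hS, update_eq_self t _⟩

variable [Fintype κ]

theorem exists_eq_update_of_isPlay (hg : IsVanishingCode s g) (hs : s < Fintype.card κ)
    {x : κ → Bool} {t : κ} (hx : IsPlay (writeCodeword s g) x t) :
    ∃ S b, #S = s ∧ t ∉ S ∧ x = update (g S) t b := by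
  obtain ⟨h, b, hth, rfl⟩ := hx
  obtain ⟨ht, hh⟩ := List.nodup_cons.1 hth.1
  have hlen : s ≤ h.length := by
    have := hth.length_eq
    rw [List.length_cons] at this
    lia
  have hsub : h.rtake s <:+ h := List.drop_suffix _ h
  have hcard : #(h.rtake s).toFinset = s := by
    rw [List.toFinset_card_of_nodup (hh.sublist hsub.sublist), List.rtake, List.length_drop]
    lia
  refine ⟨(h.rtake s).toFinset, b, hcard, fun hmem => ht (hsub.subset (List.mem_toFinset.1 hmem)),
    update_eq_iff.2 ⟨by rw [update_self], fun k hk => ?_⟩⟩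
  rw [update_of_ne hk, written_writeCodeword hlen
    (fun i hi => hg.eq_false _ hcard i (List.mem_toFinset.2 hi))
    (hth.mem_of_ne hk)]

theorem endSensitive (hg : IsVanishingCode s g) (hs : s < Fintype.card κ)
    {f : (κ → Bool) → Bool} (hf : ∀ x, f x = false ↔ IsCodeword s g x) :
    EndSensitive (writeCodeword s g) f := by
  intro x t hx
  obtain ⟨S, b, hS, -, rfl⟩ := hg.exists_eq_update_of_isPlay hs hx
  have htrue := (hf _).trans (hg.isCodeword_update_iff hS t true)
  have hfalse := (hf _).trans (hg.isCodeword_update_iff hS t false)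
  rw [update_idem, update_idem]
  intro heq
  rw [heq, hfalse] at htrue
  cases hgt : g S t <;> simp [hgt] at htrue

theorem endCandidates_subset_compl (hg : IsVanishingCode s g) {S : Finset κ} (hS : #S = s) (t : κ)
    (b : Bool) : endCandidates s g (update (g S) t b) ⊆ Sᶜ := by
  intro i hi
  obtain ⟨S', b', hS', hiS', hx⟩ := (mem_filter.1 hi).2
  obtain rfl := hg.eq_of_update_eq S S' hS hS' t i b b' hx
  exact mem_compl.2 hiS'

theorem endCandidates_subset_singleton (hg : IsVanishingCode s g) {S : Finset κ} (hS : #S = s)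
    {t : κ} {b : Bool} (hb : b ≠ g S t) : endCandidates s g (update (g S) t b) ⊆ {t} := by
  intro i hi
  obtain ⟨S', b', hS', -, hx⟩ := (mem_filter.1 hi).2
  obtain rfl := hg.eq_of_update_eq S S' hS hS' t i b b' hx
  by_contra hit
  have hti : t ≠ i := fun hti => hit (mem_singleton.2 hti.symm)
  have hbt := congrFun hx t
  rw [update_self, update_of_ne hti] at hbt
  exact hb hbt

theorem mem_endCandidates_and_card_le (hg : IsVanishingCode s g) (hs : s < Fintype.card κ)
    {x : κ → Bool} {t : κ} (hx : IsPlay (writeCodeword s g) x t) {f : (κ → Bool) → Bool}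
    (hf : ∀ x, f x = false ↔ IsCodeword s g x) :
    t ∈ endCandidates s g x ∧
      #(endCandidates s g x) ≤ if f x = true then 1 else Fintype.card κ - s := by
  obtain ⟨S, b, hS, ht, rfl⟩ := hg.exists_eq_update_of_isPlay hs hx
  refine ⟨mem_filter.2 ⟨mem_univ t, S, b, hS, ht, rfl⟩, ?_⟩
  have hfb := (hf _).trans (hg.isCodeword_update_iff hS t b)
  split_ifs with hc
  · refine card_le_card (hg.endCandidates_subset_singleton hS fun hb => ?_)
    simp [hfb.2 hb] at hc
  · exact (card_le_card (hg.endCandidates_subset_compl hS t b)).trans_eq (by rw [card_compl, hS])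

end IsVanishingCode

theorem written_const {c : Bool} {h : List ι} {i : ι} (hi : i ∈ h) :
    written (fun _ => c) h i = c := by
  induction h with
  | nil => simp at hi
  | cons j h ih =>
    rcases eq_or_ne i j with rfl | hij
    · exact update_self ..
    · rw [written, update_of_ne hij, ih ((List.mem_cons.1 hi).resolve_left hij)]

theorem IsPlay.eq_of_ne {c : Bool} {y : ι → Bool} {t j : ι} (hy : IsPlay (fun _ => c) y t)
    (hj : j ≠ t) : y j = c := by
  obtain ⟨h, b, hth, rfl⟩ := hy
  rw [update_of_ne hj, written_const (hth.mem_of_ne hj)]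

theorem IsPlay.mem_and_sum_le [Fintype ι] {w : Bool → ℕ} {y : ι → Bool} {t : ι}
    (hy : IsPlay (fun _ => true) y t) :
    t ∈ ({j | y j = false ∨ ∀ i, y i = true} : Finset ι) ∧
      ∑ j with y j = false ∨ ∀ i, y i = true, w (y j) ≤
        max (Fintype.card ι * w true) (w false) := by
  cases ht : y t with
  | false =>
    have hset : ({j | y j = false ∨ ∀ i, y i = true} : Finset ι) = {t} := by
      ext j
      rcases eq_or_ne j t with rfl | hj
      · simp [ht]
      · simpa [hj, hy.eq_of_ne hj] using ⟨t, ht⟩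
    simp [hset, ht]
  | true =>
    have hall : ∀ j, y j = true := fun j => by
      rcases eq_or_ne j t with rfl | hj
      exacts [ht, hy.eq_of_ne hj]
    simp [hall]

theorem IsVanishingCode.hasStrategyOn_prod [Fintype ι] [Fintype κ] (hg : IsVanishingCode s g)
    (hs : s < Fintype.card κ) :
    HasStrategyOn (max (Fintype.card ι) (Fintype.card κ - s)) (ι × κ) := by
  classical
  let f : (κ → Bool) → Bool := fun x => decide (¬ IsCodeword s g x)
  have hf : ∀ x, f x = false ↔ IsCodeword s g x := by simp [f]
  refine .of_compose (a₁ := fun _ => true) (B₁ := fun y => {j | y j = false ∨ ∀ i, y i = true})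
    (fun c => if c = true then 1 else Fintype.card κ - s) (fun y t hy => ?_)
    (fun x t hx => hg.mem_endCandidates_and_card_le hs hx hf) (hg.endSensitive hs hf)
  simpa using hy.mem_and_sum_le (w := fun c => if c = true then 1 else Fintype.card κ - s)

end VanishingCode

section HammingMatching

/-- The word of length `15` whose bits are the binary digits of `m`. -/
def toWord (m : ℕ) : Fin 15 → Bool :=
  fun i => m.testBit i

/-- The set of positions whose indicator function has the binary digits of `m`. -/
def toPositions (m : ℕ) : Finset (Fin 15) :=
  {i | toWord m i = true}

/-- Cyclic rotation of a word of length `15` by `s` positions, on binary encodings. -/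
def rotate (m s : ℕ) : ℕ :=
  (m <<< s ||| m >>> (15 - s)) % 2 ^ 15

/-- Binary encodings of pairs consisting of a 4-element set of positions and a word of the cyclic
Hamming code, one pair for each orbit of the 4-element sets under rotation. They were found by a
computer search for a rotation-equivariant matching. -/
def matchingRepresentatives : List (ℕ × ℕ) := [
    (15, 18928), (23, 27560), (27, 25796), (29, 30690), (39, 27080), (43, 25428), (45, 14226),
    (51, 30660), (53, 16010), (57, 15300), (71, 32672), (75, 11156), (77, 31394), (83, 23436),
    (85, 11050), (89, 9634), (99, 32140), (101, 11658), (105, 32646), (113, 13454), (135, 16200),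
    (139, 27972), (141, 16162), (147, 11876), (149, 32354), (153, 14150), (163, 20252),
    (165, 7962), (169, 5458), (177, 28942), (195, 22840), (197, 15656), (201, 27414), (209, 15630),
    (225, 26138), (263, 28248), (267, 31984), (269, 23280), (275, 30888), (277, 24258),
    (281, 12868), (291, 28876), (293, 14024), (297, 31364), (305, 3780), (323, 6316), (325, 17954),
    (329, 28180), (337, 3758), (353, 4750), (387, 23144), (389, 10778), (393, 23632), (401, 7276),
    (417, 32264), (449, 30214), (523, 5492), (525, 15792), (531, 27012), (533, 32192),
    (537, 30914), (547, 5188), (549, 11336), (553, 24784), (561, 9672), (579, 4532), (581, 27808),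
    (585, 2198), (593, 14378), (609, 1434), (643, 14704), (645, 6472), (649, 30768), (657, 23904),
    (673, 2388), (777, 1254), (785, 31746), (801, 29760), (1059, 4296), (1061, 6608),
    (1065, 23488), (1073, 2632), (1091, 2328), (1093, 522), (1097, 900), (1105, 398), (1157, 346),
    (1161, 278), (1169, 30976), (1297, 106), (2185, 38)]

/-- The matching of all 4-element sets of positions into the Hamming code, in binary encoding. -/
def matching : List (ℕ × ℕ) :=
  matchingRepresentatives.flatMap fun p =>
    (List.range 15).map fun s => (rotate p.1 s, rotate p.2 s)

/-- The binary encodings of the words at Hamming distance at most `1` from a given word. -/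
def ball (m : ℕ) : List ℕ :=
  m :: (List.range 15).map fun i => m ^^^ 2 ^ i

/-- Test for the absence of repetitions in a list of numbers. The numbers encountered so far are the
binary digits of `seen`, which makes the test run in linear time. -/
def checkNodup (seen : ℕ) : List ℕ → Bool
  | [] => true
  | m :: l => !seen.testBit m && checkNodup (seen ||| 2 ^ m) l

theorem nodup_of_checkNodup {seen : ℕ} {l : List ℕ} (hl : checkNodup seen l = true) :
    l.Nodup ∧ ∀ m ∈ l, seen.testBit m = false := by
  induction l generalizing seen with
  | nil => simp
  | cons m l ih =>
    simp only [checkNodup, Bool.and_eq_true, Bool.not_eq_true'] at hl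
    obtain ⟨hnodup, hseen⟩ := ih hl.2
    simp only [Nat.testBit_or, Nat.testBit_two_pow, Bool.or_eq_false_iff,
      decide_eq_false_iff_not] at hseen
    refine ⟨List.nodup_cons.2 ⟨fun hm => (hseen m hm).2 rfl, hnodup⟩, ?_⟩
    simpa [hl.1] using fun m' hm' => (hseen m' hm').1

theorem toWord_injOn : Set.InjOn toWord (Set.Iio (2 ^ 15)) := by
  intro m hm m' hm' heq
  refine Nat.eq_of_testBit_eq fun i => ?_
  rcases lt_or_ge i 15 with hi | hi
  · exact congrFun heq ⟨i, hi⟩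
  · have hpow : 2 ^ 15 ≤ 2 ^ i := Nat.pow_le_pow_right two_pos hi
    rw [Nat.testBit_lt_two_pow (hm.trans_le hpow), Nat.testBit_lt_two_pow (hm'.trans_le hpow)]

theorem toPositions_injOn : Set.InjOn toPositions (Set.Iio (2 ^ 15)) := by
  refine fun m hm m' hm' heq => toWord_injOn hm hm' (funext fun i => Bool.eq_iff_iff.2 ?_)
  simpa [toPositions] using Finset.ext_iff.1 heq i

theorem lt_of_mem_matching {p : ℕ × ℕ} (hp : p ∈ matching) : p.1 < 2 ^ 15 ∧ p.2 < 2 ^ 15 := by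
  obtain ⟨q, -, hq⟩ := List.mem_flatMap.1 hp
  obtain ⟨s, -, rfl⟩ := List.mem_map.1 hq
  exact ⟨Nat.mod_lt _ (by positivity), Nat.mod_lt _ (by positivity)⟩

theorem lt_of_mem_ball {m n : ℕ} (hm : m < 2 ^ 15) (hn : n ∈ ball m) : n < 2 ^ 15 := by
  rcases List.mem_cons.1 hn with rfl | hn
  · exact hm
  · obtain ⟨i, hi, rfl⟩ := List.mem_map.1 hn
    exact Nat.xor_lt_two_pow hm (Nat.pow_lt_pow_right one_lt_two (List.mem_range.1 hi))

theorem exists_mem_ball_toWord_eq_update (m : ℕ) (i : Fin 15) (b : Bool) :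
    ∃ n ∈ ball m, toWord n = update (toWord m) i b := by
  rcases eq_or_ne b (toWord m i) with rfl | hb
  · exact ⟨m, List.mem_cons_self, (update_eq_self i _).symm⟩
  · refine ⟨m ^^^ 2 ^ (i : ℕ), List.mem_cons_of_mem _ (List.mem_map.2 ⟨i, by simp, rfl⟩), ?_⟩
    refine (update_eq_iff.2 ⟨?_, fun k hk => ?_⟩).symm
    · rw [Bool.eq_not.2 hb]
      simp [toWord]
    · simp [toWord, Fin.val_ne_of_ne hk.symm]

theorem card_toPositions_of_mem_matching : ∀ p ∈ matching, #(toPositions p.1) = 4 := by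
  decide +kernel

theorem land_eq_zero_of_mem_matching : ∀ p ∈ matching, p.1 &&& p.2 = 0 := by
  decide +kernel

theorem nodup_map_fst_matching : (matching.map Prod.fst).Nodup :=
  (nodup_of_checkNodup (seen := 0) (by decide +kernel)).1

theorem nodup_flatMap_ball_matching : (matching.flatMap fun p => ball p.2).Nodup :=
  (nodup_of_checkNodup (seen := 0) (by decide +kernel)).1

theorem exists_mem_matching_toPositions_eq {S : Finset (Fin 15)} (hS : #S = 4) :
    ∃ p ∈ matching, toPositions p.1 = S := by
  have hinj : Set.InjOn toPositions (matching.map Prod.fst).toFinset := by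
    refine toPositions_injOn.mono fun m hm => ?_
    obtain ⟨p, hp, rfl⟩ := List.mem_map.1 (List.mem_toFinset.1 hm)
    exact (lt_of_mem_matching hp).1
  have himage : (matching.map Prod.fst).toFinset.image toPositions = powersetCard 4 univ := by
    refine eq_of_subset_of_card_le (fun T hT => ?_) ?_
    · obtain ⟨m, hm, rfl⟩ := mem_image.1 hT
      obtain ⟨p, hp, rfl⟩ := List.mem_map.1 (List.mem_toFinset.1 hm)
      exact mem_powersetCard.2 ⟨subset_univ _, card_toPositions_of_mem_matching p hp⟩
    · rw [card_image_of_injOn hinj, List.toFinset_card_of_nodup nodup_map_fst_matching,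
        card_powersetCard, card_univ, Fintype.card_fin, List.length_map]
      decide +kernel
  obtain ⟨m, hm, rfl⟩ := mem_image.1 (himage ▸ mem_powersetCard.2 ⟨subset_univ S, hS⟩)
  obtain ⟨p, hp, rfl⟩ := List.mem_map.1 (List.mem_toFinset.1 hm)
  exact ⟨p, hp, rfl⟩

theorem eq_of_update_toWord_eq {p q : ℕ × ℕ} (hp : p ∈ matching) (hq : q ∈ matching)
    {i j : Fin 15} {b c : Bool}
    (heq : update (toWord p.2) i b = update (toWord q.2) j c) : p = q := by
  obtain ⟨m, hm, hmp⟩ := exists_mem_ball_toWord_eq_update p.2 i b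
  obtain ⟨n, hn, hnq⟩ := exists_mem_ball_toWord_eq_update q.2 j c
  obtain rfl : m = n :=
    toWord_injOn (lt_of_mem_ball (lt_of_mem_matching hp).2 hm)
      (lt_of_mem_ball (lt_of_mem_matching hq).2 hn) (by rw [hmp, hnq, heq])
  by_contra hpq
  have : Std.Symm (List.Disjoint on fun r : ℕ × ℕ => ball r.2) := ⟨fun _ _ h => h.symm⟩
  exact (List.nodup_flatMap.1 nodup_flatMap_ball_matching).2.forall hp hq hpq hm hn

theorem exists_isVanishingCode_four :
    ∃ g : Finset (Fin 15) → Fin 15 → Bool, IsVanishingCode 4 g := by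
  choose! p hp hpS using fun S (hS : #S = 4) => exists_mem_matching_toPositions_eq hS
  refine ⟨fun S => toWord (p S).2, fun S hS i hi => ?_, fun S S' hS hS' i j b c heq => ?_⟩
  · have hbit := congrArg (Nat.testBit · i) (land_eq_zero_of_mem_matching _ (hp S hS))
    rw [← hpS S hS] at hi
    have hi : (p S).1.testBit i = true := (mem_filter.1 hi).2
    simpa [toWord, hi] using hbit
  · rw [← hpS S hS, ← hpS S' hS', eq_of_update_toWord_eq (hp S hS) (hp S' hS') heq]

end HammingMatching

theorem hasStrategyOn_eleven : HasStrategyOn 11 (Fin 11 × Fin 15) := by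
  obtain ⟨g, hg⟩ := exists_isVanishingCode_four
  simpa using hg.hasStrategyOn_prod (ι := Fin 11) (by simp)

end GKS

/-- For every positive integer `k`, there exists an `(11 ^ k, 165 ^ k)`
strategy for the GKS game; equivalently, `C(165 ^ k) ≤ 11 ^ k` for all
`k ≥ 1`. -/
theorem gks_strategy_pow (k : ℕ) (hk : 1 ≤ k) :
    HasGKSStrategy (11 ^ k) (165 ^ k) ∧ gksCost (165 ^ k) ≤ 11 ^ k := by
  have hstrategy : HasGKSStrategy (11 ^ k) (165 ^ k) :=
    ((GKS.hasStrategyOn_eleven.pow k).of_equiv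
      (Fintype.equivFinOfCardEq (by simp)).symm).hasGKSStrategy
  exact ⟨hstrategy, Nat.sInf_le hstrategy⟩
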